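/- arXiv:2504.10530 — 6 statements merged into one kernel-verified Lean document; each statement's English description precedes it below -/
import Mathlib

section
/- Let (Ω, ℱ, P) be a probability space, β > 0, and q_n = e^{−β} β^n / n! for n ∈ ℕ be the Poisson(β) probability mass function, with cumulative distribution function F(n) = Σ_{i=0}^n q_i. Let (I_n)_{n∈ℕ} be a sequence of {0,1}-valued random variables that is pointwise nonincreasing in n (I_{n+1} ≤ I_n for all n) with I_0 = 1 almost surely, and define M : Ω → ℕ ∪ {∞} by M = sup{n : I_n = 1}. Then Σ_{n∈ℕ} q_n E[I_n] = E[G(M)], where G(m) = F(m) for m ∈ ℕ and G(∞) = 1. -/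
open MeasureTheory
open scoped ProbabilityTheory

/-- The Poisson(β) probability mass function `q_n = e^{-β} β^n / n!`. -/
noncomputable def poissonPMF (β : ℝ) (n : ℕ) : ℝ := Real.exp (-β) * β ^ n / n.factorial

/-- The Poisson(β) cumulative distribution function `F(n) = Σ_{i=0}^n q_i`. -/
noncomputable def poissonCDF (β : ℝ) (n : ℕ) : ℝ := ∑ i ∈ Finset.range (n + 1), poissonPMF β i

/-- Extension `G` of the Poisson CDF to `ℕ∞` with `G(∞) = 1`. -/
noncomputable def poissonCDF' (β : ℝ) (m : ℕ∞) : ℝ :=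
  if m = ⊤ then 1 else poissonCDF β m.toNat

/-!
Almost surely `I n ω = 1` exactly when `n ≤ M ω`, because a nonempty initial segment of `ℕ` is
determined by its supremum in `ℕ∞`. Hence `∑ₙ qₙ I n ω` is the sum of `qₙ` over all `n ≤ M ω`,
which is `G (M ω)`, and dominated convergence exchanges the sum with the expectation.
-/

theorem hasSum_poissonPMF (β : ℝ) : HasSum (poissonPMF β) 1 := by
  have hexp : HasSum (fun n : ℕ ↦ β ^ n / n.factorial) (Real.exp β) := by
    simpa only [Real.exp_eq_exp_ℝ] using NormedSpace.expSeries_div_hasSum_exp β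
  change HasSum (fun n : ℕ ↦ Real.exp (-β) * β ^ n / n.factorial) 1
  simpa only [← mul_div_assoc, ← Real.exp_add, neg_add_cancel, Real.exp_zero]
    using hexp.mul_left (Real.exp (-β))

theorem poissonCDF'_eq_tsum_indicator (β : ℝ) (m : ℕ∞) :
    poissonCDF' β m = ∑' n, {k : ℕ | (k : ℕ∞) ≤ m}.indicator (poissonPMF β) n := by
  induction m using ENat.recTopCoe with
  | top => simp [poissonCDF', (hasSum_poissonPMF β).tsum_eq]
  | coe m =>
    have hinitial : {k : ℕ | (k : ℕ∞) ≤ m} = ↑(Finset.range (m + 1)) := by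
      ext k
      simp
    rw [hinitial, ← tsum_subtype, Finset.tsum_subtype']
    simp [poissonCDF', poissonCDF]

theorem natCast_le_iSup_natCast_iff_mem {s : Set ℕ} (hs : IsLowerSet s) (h0 : 0 ∈ s) (n : ℕ) :
    (n : ℕ∞) ≤ ⨆ (k : ℕ) (_ : k ∈ s), (k : ℕ∞) ↔ n ∈ s := by
  refine ⟨fun hle ↦ ?_, fun hn ↦ le_iSup₂_of_le n hn le_rfl⟩
  cases n with
  | zero => exact h0
  | succ n =>
    have hlt : (n : ℕ∞) < ⨆ (k : ℕ) (_ : k ∈ s), (k : ℕ∞) :=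
      (Nat.cast_lt.2 n.lt_succ_self).trans_le hle
    obtain ⟨k, hk, hnk⟩ := lt_biSup_iff.1 hlt
    exact hs (Nat.succ_le_of_lt (Nat.cast_lt.1 hnk)) hk

theorem mul_eq_indicator_natCast_le_iSup {R : Type*} [MulZeroOneClass R] [PartialOrder R]
    [ZeroLEOneClass R] [NeZero (1 : R)] {x : ℕ → R} (h01 : ∀ n, x n = 0 ∨ x n = 1)
    (hx : Antitone x) (h0 : x 0 = 1) (q : ℕ → R) :
    (fun n ↦ q n * x n) =
      {k : ℕ | (k : ℕ∞) ≤ ⨆ (n : ℕ) (_ : x n = 1), (n : ℕ∞)}.indicator q := by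
  have hlower : IsLowerSet {n | x n = 1} := fun b a hab (hb : x b = 1) ↦
    (h01 a).resolve_left fun ha ↦ zero_lt_one.not_ge (hb ▸ ha ▸ hx hab)
  have hset : {k : ℕ | (k : ℕ∞) ≤ ⨆ (n : ℕ) (_ : x n = 1), (n : ℕ∞)} = {n | x n = 1} :=
    Set.ext (natCast_le_iSup_natCast_iff_mem hlower h0)
  rw [hset]
  ext n
  rcases h01 n with hn | hn <;> simp [hn]

section Integral

variable {Ω : Type*} [MeasurableSpace Ω] {μ : Measure Ω}

theorem hasSum_smul_integral_of_dominated {ι E : Type*} [Countable ι] [NormedAddCommGroup E]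
    [NormedSpace ℝ E] {a : ι → ℝ} {f : ι → Ω → E} {g : Ω → E} {bound : Ω → ℝ} (ha : Summable a)
    (hf : ∀ i, AEStronglyMeasurable (f i) μ) (hbound : Integrable bound μ)
    (hle : ∀ i, ∀ᵐ ω ∂μ, ‖f i ω‖ ≤ bound ω)
    (hg : ∀ᵐ ω ∂μ, HasSum (fun i ↦ a i • f i ω) (g ω)) :
    HasSum (fun i ↦ a i • ∫ ω, f i ω ∂μ) (∫ ω, g ω ∂μ) := by
  simp_rw [← integral_smul]
  refine hasSum_integral_of_dominated_convergence (fun i ω ↦ ‖a i‖ * bound ω)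
    (fun i ↦ (hf i).const_smul (a i)) (fun i ↦ ?_)
    (.of_forall fun ω ↦ ha.norm.mul_right (bound ω)) ?_ hg
  · filter_upwards [hle i] with ω hω
    rw [norm_smul]
    gcongr
  · simpa only [tsum_mul_right] using hbound.const_mul (∑' i, ‖a i‖)

variable [IsFiniteMeasure μ]

theorem hasSum_mul_integral_of_antitone_zero_one {q : ℕ → ℝ} (hq : Summable q)
    {I : ℕ → Ω → ℝ} (hI : ∀ n, AEMeasurable (I n) μ)
    (h01 : ∀ᵐ ω ∂μ, ∀ n, I n ω = 0 ∨ I n ω = 1) (hanti : ∀ᵐ ω ∂μ, Antitone (I · ω))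
    (hI0 : ∀ᵐ ω ∂μ, I 0 ω = 1) {M : Ω → ℕ∞}
    (hM : ∀ᵐ ω ∂μ, M ω = ⨆ (n : ℕ) (_ : I n ω = 1), (n : ℕ∞)) :
    HasSum (fun n ↦ q n * ∫ ω, I n ω ∂μ)
      (∫ ω, ∑' n, {k : ℕ | (k : ℕ∞) ≤ M ω}.indicator q n ∂μ) := by
  refine hasSum_smul_integral_of_dominated hq (fun n ↦ (hI n).aestronglyMeasurable)
    (integrable_const 1) (fun n ↦ ?_) ?_
  · filter_upwards [h01] with ω hω
    rcases hω n with h | h <;> simp [h]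
  · filter_upwards [h01, hanti, hI0, hM] with ω h01ω hantiω h0ω hMω
    simp only [smul_eq_mul]
    rw [mul_eq_indicator_natCast_le_iSup h01ω hantiω h0ω, ← hMω]
    exact (hq.indicator _).hasSum

theorem tsum_poissonPMF_mul_integral_eq_integral_poissonCDF'_general (β : ℝ)
    {I : ℕ → Ω → ℝ} (hI : ∀ n, AEMeasurable (I n) μ)
    (h01 : ∀ᵐ ω ∂μ, ∀ n, I n ω = 0 ∨ I n ω = 1) (hanti : ∀ᵐ ω ∂μ, Antitone (I · ω))
    (hI0 : ∀ᵐ ω ∂μ, I 0 ω = 1) {M : Ω → ℕ∞}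
    (hM : ∀ᵐ ω ∂μ, M ω = ⨆ (n : ℕ) (_ : I n ω = 1), (n : ℕ∞)) :
    HasSum (fun n ↦ poissonPMF β n * ∫ ω, I n ω ∂μ) (∫ ω, poissonCDF' β (M ω) ∂μ) := by
  simpa only [poissonCDF'_eq_tsum_indicator] using
    hasSum_mul_integral_of_antitone_zero_one (hasSum_poissonPMF β).summable hI h01 hanti hI0 hM

end Integral

/-- Unbiasedness of the conditional Monte Carlo estimator:
`Σ_n q_n E[I_n] = E[G(M)]` where `M = sup {n : I_n = 1}`. -/
theorem tsum_poissonPMF_mul_integral_eq_integral_poissonCDF'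
    {Ω : Type*} [MeasureSpace Ω] [IsProbabilityMeasure (ℙ : Measure Ω)]
    (β : ℝ) (hβ : 0 < β)
    (I : ℕ → Ω → ℝ) (hmeas : ∀ n, Measurable (I n))
    (h01 : ∀ n ω, I n ω = 0 ∨ I n ω = 1)
    (hmono : ∀ n ω, I (n + 1) ω ≤ I n ω)
    (hI0 : ∀ᵐ ω ∂(ℙ : Measure Ω), I 0 ω = 1)
    (M : Ω → ℕ∞)
    (hM : ∀ ω, M ω = ⨆ (n : ℕ) (_ : I n ω = 1), (n : ℕ∞)) :
    ∑' n : ℕ, poissonPMF β n * ∫ ω, I n ω = ∫ ω, poissonCDF' β (M ω) := by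
  have hanti (ω : Ω) : Antitone (I · ω) := antitone_nat_of_succ_le (hmono · ω)
  exact (tsum_poissonPMF_mul_integral_eq_integral_poissonCDF'_general β
    (fun n ↦ (hmeas n).aemeasurable) (.of_forall fun ω n ↦ h01 n ω) (.of_forall hanti) hI0
    (.of_forall hM)).tsum_eq
end

section
/- Let (Ω, ℱ, P) be a probability space, β > 0, and q_n = e^{−β} β^n / n! for n ∈ ℕ. Let (I_n)_{n∈ℕ} be a sequence of {0,1}-valued random variables that is pointwise nonincreasing in n, and set p_n = E[I_n]. Then E[(Σ_{n∈ℕ} q_n I_n)²] = Σ_{n∈ℕ} q_n² p_n + 2 Σ_{m<n} q_m q_n p_n. -/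
open MeasureTheory
open scoped ProbabilityTheory

/-!
Group the square of an absolutely convergent series by the larger index of each product: the
terms with largest index `n` contribute `a n ^ 2 + 2 * (a n * ∑ m ∈ Finset.range n, a m)`.
For `a n = I n ω • q n`, the identity `I n * I m = I n` for `m ≤ n` lets the factor `I n ω` be
pulled out of this contribution, so the square is linear in the indicators and can be integrated
term by term, with dominating function a multiple of `I 0`.
-/

section SquareOfSeries

theorem sq_sum_range {R : Type*} [CommSemiring R] (a : ℕ → R) (N : ℕ) :
    (∑ n ∈ Finset.range N, a n) ^ 2 =
      ∑ n ∈ Finset.range N, (a n ^ 2 + 2 * (a n * ∑ m ∈ Finset.range n, a m)) := by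
  induction N with
  | zero => simp
  | succ N ih =>
    rw [Finset.sum_range_succ, Finset.sum_range_succ, ← ih]
    ring

theorem summable_norm_mul_of_norm_le {ι R : Type*} [NonUnitalSeminormedRing R] {a b : ι → R}
    {C : ℝ} (ha : Summable fun i ↦ ‖a i‖) (hb : ∀ i, ‖b i‖ ≤ C) :
    Summable fun i ↦ ‖a i * b i‖ :=
  (ha.mul_right C).of_nonneg_of_le (fun _ ↦ norm_nonneg _) fun i ↦
    (norm_mul_le _ _).trans (mul_le_mul_of_nonneg_left (hb i) (norm_nonneg _))

theorem summable_norm_sq {ι R : Type*} [SeminormedRing R] {a : ι → R}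
    (ha : Summable fun i ↦ ‖a i‖) : Summable fun i ↦ ‖a i ^ 2‖ := by
  simp_rw [sq]
  exact summable_norm_mul_of_norm_le ha fun i ↦ ha.le_tsum i fun _ _ ↦ norm_nonneg _

theorem summable_norm_mul_sum_range {R : Type*} [NonUnitalSeminormedRing R] {a : ℕ → R}
    (ha : Summable fun n ↦ ‖a n‖) :
    Summable fun n ↦ ‖a n * ∑ m ∈ Finset.range n, a m‖ :=
  summable_norm_mul_of_norm_le ha fun _ ↦
    (norm_sum_le _ _).trans (ha.sum_le_tsum _ fun _ _ ↦ norm_nonneg _)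

theorem summable_norm_sq_add_two_mul_sum_range {R : Type*} [SeminormedRing R] {a : ℕ → R}
    (ha : Summable fun n ↦ ‖a n‖) :
    Summable fun n ↦ ‖a n ^ 2 + 2 * (a n * ∑ m ∈ Finset.range n, a m)‖ := by
  have hcross := summable_norm_mul_sum_range ha
  refine ((summable_norm_sq ha).add (hcross.add hcross)).of_nonneg_of_le
    (fun _ ↦ norm_nonneg _) fun n ↦ ?_
  rw [two_mul]
  exact norm_add_le_of_le le_rfl (norm_add_le _ _)

theorem hasSum_sq_tsum {A : Type*} [NormedCommRing A] [CompleteSpace A] {a : ℕ → A}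
    (ha : Summable fun n ↦ ‖a n‖) :
    HasSum (fun n ↦ a n ^ 2 + 2 * (a n * ∑ m ∈ Finset.range n, a m)) ((∑' n, a n) ^ 2) := by
  rw [(summable_norm_sq_add_two_mul_sum_range ha).of_norm.hasSum_iff_tendsto_nat]
  simpa only [sq_sum_range] using ha.of_norm.hasSum.tendsto_sum_nat.pow 2

theorem hasSum_sq_tsum_smul {R A : Type*} [CommSemiring R] [NormedCommRing A] [CompleteSpace A]
    [Algebra R A] {x : ℕ → R} {a : ℕ → A} (hx : ∀ ⦃m n⦄, m ≤ n → x n * x m = x n)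
    (ha : Summable fun n ↦ ‖x n • a n‖) :
    HasSum (fun n ↦ x n • (a n ^ 2 + 2 * (a n * ∑ m ∈ Finset.range n, a m)))
      ((∑' n, x n • a n) ^ 2) := by
  refine (hasSum_sq_tsum ha).congr_fun fun n ↦ ?_
  have hsq : (x n • a n) ^ 2 = x n • a n ^ 2 := by
    rw [smul_pow, sq (x n), hx le_rfl]
  have hcross : x n • a n * ∑ m ∈ Finset.range n, x m • a m =
      x n • (a n * ∑ m ∈ Finset.range n, a m) := by
    simp_rw [Finset.mul_sum, Finset.smul_sum]
    refine Finset.sum_congr rfl fun m hm ↦ ?_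
    rw [smul_mul_smul_comm, hx (Finset.mem_range.1 hm).le]
  rw [hsq, hcross, mul_smul_comm, smul_add]

end SquareOfSeries

theorem mul_eq_left_of_le_of_eq_zero_or_one {R : Type*} [MulZeroOneClass R] [PartialOrder R]
    [ZeroLEOneClass R] [NeZero (1 : R)] {x y : R} (hx : x = 0 ∨ x = 1) (hy : y = 0 ∨ y = 1)
    (hxy : x ≤ y) : x * y = x := by
  rcases hx with rfl | rfl
  · exact zero_mul y
  · rcases hy with rfl | rfl
    · exact absurd hxy zero_lt_one.not_ge
    · exact one_mul 1

theorem hasSum_integral_smul_of_norm_le {Ω ι 𝕜 E : Type*} [MeasurableSpace Ω] {μ : Measure Ω}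
    [Countable ι] [RCLike 𝕜] [NormedAddCommGroup E] [NormedSpace ℝ E] [NormedSpace 𝕜 E]
    [CompleteSpace E] {f : ι → Ω → 𝕜} {g : Ω → ℝ} {c : ι → E}
    (hf : ∀ i, AEStronglyMeasurable (f i) μ) (hg : Integrable g μ)
    (hfg : ∀ i, ∀ᵐ ω ∂μ, ‖f i ω‖ ≤ g ω) (hc : Summable fun i ↦ ‖c i‖) :
    HasSum (fun i ↦ (∫ ω, f i ω ∂μ) • c i) (∫ ω, ∑' i, f i ω • c i ∂μ) := by
  have hbound : ∀ i, ∀ᵐ ω ∂μ, ‖f i ω • c i‖ ≤ g ω * ‖c i‖ := fun i ↦ by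
    filter_upwards [hfg i] with ω hω
    rw [norm_smul]
    gcongr
  simp_rw [← integral_smul_const]
  refine hasSum_integral_of_dominated_convergence (fun i ω ↦ g ω * ‖c i‖)
    (fun i ↦ (hf i).smul_const (c i)) hbound (.of_forall fun ω ↦ hc.mul_left (g ω)) ?_ ?_
  · simpa only [tsum_mul_left] using hg.mul_const (∑' i, ‖c i‖)
  · filter_upwards [ae_all_iff.2 hbound] with ω hω
    exact ((hc.mul_left (g ω)).of_norm_bounded hω).hasSum

theorem integral_sq_tsum_poissonPMF_mul_indicator_general {Ω A : Type*} [MeasurableSpace Ω]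
    {μ : Measure Ω} [NormedCommRing A] [NormedAlgebra ℝ A] [CompleteSpace A]
    {q : ℕ → A} (hq : Summable fun n ↦ ‖q n‖)
    {I : ℕ → Ω → ℝ} (hmeas : ∀ n, AEStronglyMeasurable (I n) μ) (hint : Integrable (I 0) μ)
    (h01 : ∀ n, ∀ᵐ ω ∂μ, I n ω = 0 ∨ I n ω = 1) (hmono : ∀ n, I (n + 1) ≤ᵐ[μ] I n) :
    ∫ ω, (∑' n, I n ω • q n) ^ 2 ∂μ =
      ∑' n, (∫ ω, I n ω ∂μ) • q n ^ 2 +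
        2 * ∑' n, (∫ ω, I n ω ∂μ) • (q n * ∑ m ∈ Finset.range n, q m) := by
  have hanti : ∀ᵐ ω ∂μ, Antitone (I · ω) :=
    (ae_all_iff.2 hmono).mono fun _ hω ↦ antitone_nat_of_succ_le hω
  have hnorm : ∀ n, ∀ᵐ ω ∂μ, ‖I n ω‖ ≤ I 0 ω := fun n ↦ by
    filter_upwards [hanti, h01 n] with ω hω hn
    rw [Real.norm_of_nonneg (by rcases hn with h | h <;> simp [h])]
    exact hω n.zero_le
  have hsq : ∀ᵐ ω ∂μ, (∑' n, I n ω • q n) ^ 2 =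
      ∑' n, I n ω • (q n ^ 2 + 2 * (q n * ∑ m ∈ Finset.range n, q m)) := by
    filter_upwards [hanti, ae_all_iff.2 h01, ae_all_iff.2 hnorm] with ω hω hω01 hωnorm
    refine (hasSum_sq_tsum_smul (fun m n hmn ↦
      mul_eq_left_of_le_of_eq_zero_or_one (hω01 n) (hω01 m) (hω hmn)) ?_).tsum_eq.symm
    refine (hq.mul_left (I 0 ω)).of_nonneg_of_le (fun _ ↦ norm_nonneg _) fun n ↦ ?_
    rw [norm_smul]
    exact mul_le_mul_of_nonneg_right (hωnorm n) (norm_nonneg _)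
  have hintegral {c : ℕ → A} (hc : Summable fun n ↦ ‖c n‖) :=
    hasSum_integral_smul_of_norm_le hmeas hint hnorm hc
  have hcross := (hintegral (summable_norm_mul_sum_range hq)).summable
  rw [integral_congr_ae hsq,
    ← (hintegral (summable_norm_sq_add_two_mul_sum_range hq)).tsum_eq, ← hcross.tsum_mul_left,
    ← (hintegral (summable_norm_sq hq)).summable.tsum_add (hcross.mul_left 2)]
  simp_rw [smul_add, mul_smul_comm]

theorem summable_poissonPMF (β : ℝ) : Summable (poissonPMF β) :=
  ((Real.summable_pow_div_factorial β).mul_left (Real.exp (-β))).congr fun _ ↦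
    (mul_div_assoc _ _ _).symm

/-- Second moment of the conditional Monte Carlo estimator:
`E[(Σ_n q_n I_n)²] = Σ_n q_n² p_n + 2 Σ_{m<n} q_m q_n p_n`. -/
theorem integral_sq_tsum_poissonPMF_mul_indicator
    {Ω : Type*} [MeasureSpace Ω] [IsProbabilityMeasure (ℙ : Measure Ω)]
    (β : ℝ) (hβ : 0 < β)
    (I : ℕ → Ω → ℝ) (hmeas : ∀ n, Measurable (I n))
    (h01 : ∀ n ω, I n ω = 0 ∨ I n ω = 1)
    (hmono : ∀ n ω, I (n + 1) ω ≤ I n ω)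
    (p : ℕ → ℝ) (hp : ∀ n, p n = ∫ ω, I n ω) :
    ∫ ω, (∑' n : ℕ, poissonPMF β n * I n ω) ^ 2 =
      ∑' n : ℕ, (poissonPMF β n) ^ 2 * p n +
        2 * ∑' n : ℕ, (poissonPMF β n * p n * ∑ m ∈ Finset.range n, poissonPMF β m) := by
  have hint : Integrable (I 0) (ℙ : Measure Ω) :=
    .of_bound (hmeas 0).aestronglyMeasurable 1 <| .of_forall fun ω ↦ by
      rcases h01 0 ω with h | h <;> simp [h]
  simpa only [smul_eq_mul, hp, mul_comm, mul_left_comm, mul_assoc] using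
    integral_sq_tsum_poissonPMF_mul_indicator_general (summable_poissonPMF β).norm
      (fun n ↦ (hmeas n).aestronglyMeasurable) hint (fun n ↦ .of_forall (h01 n))
      (fun n ↦ .of_forall (hmono n))
end

section
/- Let β > 0 and q_n = e^{−β} β^n / n! for n ∈ ℕ. Let p : ℕ → [0,1] be nonincreasing, let n₀ ∈ ℕ and c > 0 be such that p_n = 0 for all n > n₀ and p_{n₀} ≥ c. Then Σ_{n∈ℕ} Σ_{m∈ℕ} q_n q_m p_{max(n,m)} ≤ (2/c) (Σ_{n∈ℕ} q_n p_n)². -/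
theorem poissonPMF_nonneg {β : ℝ} (hβ : 0 ≤ β) (n : ℕ) : 0 ≤ poissonPMF β n := by
  unfold poissonPMF
  positivity

theorem tsum_tsum_le_tsum_mul_tsum {ι κ : Type*} {f : ι → κ → ℝ} {a : ι → ℝ} {b : κ → ℝ}
    (hf : ∀ i j, 0 ≤ f i j) (hfab : ∀ i j, f i j ≤ a i * b j)
    (ha : Summable a) (hb : Summable b) :
    ∑' i, ∑' j, f i j ≤ (∑' i, a i) * ∑' j, b j := by
  have hrow (i : ι) : ∑' j, f i j ≤ a i * ∑' j, b j := by
    have hab : Summable fun j => a i * b j := hb.mul_left (a i)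
    rw [← tsum_mul_left]
    exact (hab.of_nonneg_of_le (hf i) (hfab i)).tsum_le_tsum (hfab i) hab
  have haB : Summable fun i => a i * ∑' j, b j := ha.mul_right _
  rw [← tsum_mul_right]
  exact (haB.of_nonneg_of_le (fun i => tsum_nonneg (hf i)) hrow).tsum_le_tsum hrow haB

-- Decouples the two indices, so that the double sum in the second moment factors.
theorem mul_apply_sup_le_mul {ι R : Type*} [SemilatticeSup ι]
    [MulZeroClass R] [Preorder R] [PosMulMono R] [MulPosMono R]
    {p : ι → R} (hp : Antitone p) {c : R} (hc : 0 ≤ c) (hpc : ∀ i, p i = 0 ∨ c ≤ p i) (i j : ι) :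
    c * p (i ⊔ j) ≤ p i * p j := by
  have hp_nonneg (k : ι) : 0 ≤ p k := (hpc k).elim (fun h => h.ge) hc.trans
  rcases hpc (i ⊔ j) with hzero | hle
  · rw [hzero, mul_zero]
    exact mul_nonneg (hp_nonneg i) (hp_nonneg j)
  · exact mul_le_mul (hle.trans (hp le_sup_left)) (hp le_sup_right) (hp_nonneg _) (hp_nonneg i)

theorem second_moment_CMC_le_general {ι : Type*} [SemilatticeSup ι] {q p : ι → ℝ}
    (hq : ∀ i, 0 ≤ q i) (hp : Antitone p) {c : ℝ} (hc : 0 < c) (hpc : ∀ i, p i = 0 ∨ c ≤ p i)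
    (hqp : Summable fun i => q i * p i) :
    ∑' i, ∑' j, q i * q j * p (i ⊔ j) ≤ (1 / c) * (∑' i, q i * p i) ^ 2 := by
  have hp_nonneg (k : ι) : 0 ≤ p k := (hpc k).elim (fun h => h.ge) hc.le.trans
  have hnonneg (i j : ι) : 0 ≤ q i * q j * p (i ⊔ j) :=
    mul_nonneg (mul_nonneg (hq i) (hq j)) (hp_nonneg _)
  have hfactor (i j : ι) : q i * q j * p (i ⊔ j) ≤ 1 / c * (q i * p i) * (q j * p j) :=
    calc q i * q j * p (i ⊔ j)
      _ ≤ q i * q j * (p i * p j / c) :=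
        mul_le_mul_of_nonneg_left ((le_div_iff₀' hc).2 (mul_apply_sup_le_mul hp hc.le hpc i j))
          (mul_nonneg (hq i) (hq j))
      _ = 1 / c * (q i * p i) * (q j * p j) := by ring
  calc ∑' i, ∑' j, q i * q j * p (i ⊔ j)
    _ ≤ (∑' i, 1 / c * (q i * p i)) * ∑' j, q j * p j :=
      tsum_tsum_le_tsum_mul_tsum hnonneg hfactor (hqp.mul_left _) hqp
    _ = 1 / c * (∑' i, q i * p i) ^ 2 := by rw [tsum_mul_left, mul_assoc, sq]

theorem eq_zero_or_le_of_antitone {ι α : Type*} [LinearOrder ι] [Zero α] [Preorder α]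
    {p : ι → α} (hp : Antitone p) {i₀ : ι} {c : α} (hzero : ∀ i, i₀ < i → p i = 0)
    (hc : c ≤ p i₀) (i : ι) : p i = 0 ∨ c ≤ p i :=
  (lt_or_ge i₀ i).imp (hzero i) fun hi => hc.trans (hp hi)

theorem summable_of_forall_gt_eq_zero {ι α : Type*} [LinearOrder ι] [LocallyFiniteOrderBot ι]
    [AddCommMonoid α] [TopologicalSpace α] {f : ι → α} {i₀ : ι} (hf : ∀ i, i₀ < i → f i = 0) :
    Summable f :=
  summable_of_ne_finset_zero (s := Finset.Iic i₀) fun i hi =>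
    hf i (not_le.1 (mt Finset.mem_Iic.2 hi))

/-- Quantitative bound from the proof of Theorem 1: if the nonincreasing `p` vanishes
beyond `n₀` and `p_{n₀} ≥ c > 0`, then the second moment of the conditional Monte Carlo
estimator is at most `(2/c)` times the square of its mean. -/
theorem second_moment_CMC_le (β : ℝ) (hβ : 0 < β)
    (p : ℕ → ℝ) (hp01 : ∀ n, p n ∈ Set.Icc (0 : ℝ) 1) (hmono : Antitone p)
    (n₀ : ℕ) (c : ℝ) (hc : 0 < c)
    (hzero : ∀ n, n₀ < n → p n = 0) (hcn₀ : c ≤ p n₀) :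
    ∑' n : ℕ, ∑' m : ℕ, poissonPMF β n * poissonPMF β m * p (max n m) ≤
      (2 / c) * (∑' n : ℕ, poissonPMF β n * p n) ^ 2 :=
  (second_moment_CMC_le_general (poissonPMF_nonneg hβ.le) hmono hc
    (eq_zero_or_le_of_antitone hmono hzero hcn₀)
    (summable_of_forall_gt_eq_zero fun n hn => mul_eq_zero_of_right _ (hzero n hn))).trans
    (by gcongr; exact one_le_two)
end

section
/- For β > 0 let q_n(β) = e^{−β} β^n / n! for n ∈ ℕ. Then lim_{β→∞} Σ_{n∈ℕ, n ≤ β} Σ_{m<n} q_m(β) q_n(β) = 1/8; equivalently, if N and N' are independent Poisson random variables with mean β, then P(N' < N ≤ β) → 1/8 as β → ∞. -/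
/-!
Let `Z = (N - β) / √β` and `Z' = (N' - β) / √β`, so that `N' < N ≤ β` says `Z' < Z ≤ 0`. By the
central limit theorem `(Z, Z')` converges in law to a pair of independent standard Gaussians. The
set `{(x, y) | y < x ≤ 0}` has a frontier of Gaussian measure zero, so the probability converges
to the Gaussian measure of this set. By exchangeability that is half the measure of the quadrant
`{x ≤ 0, y ≤ 0}`, i.e. `(1 / 2) ^ 2 / 2`.
-/

open Filter Topology MeasureTheory Set
open ProbabilityTheory hiding poissonPMF
open scoped NNReal

section ProdMeasure

variable {α β : Type*} [MeasurableSpace α] [MeasurableSpace β]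

lemma measureReal_prod_eq_tsum [Countable α] [MeasurableSingletonClass α] (μ : Measure α)
    (ν : Measure β) [IsFiniteMeasure μ] [IsFiniteMeasure ν] {s : Set (α × β)}
    (hs : MeasurableSet s) :
    (μ.prod ν).real s = ∑' a, ν.real (Prod.mk a ⁻¹' s) * μ.real {a} := by
  rw [measureReal_def, Measure.prod_apply hs, lintegral_countable', ENNReal.tsum_toReal_eq
    fun a ↦ ENNReal.mul_ne_top (measure_ne_top _ _) (measure_ne_top _ _)]
  simp only [ENNReal.toReal_mul, measureReal_def]

lemma measureReal_prod_nat_snd_lt_fst (μ ν : Measure ℕ) [IsFiniteMeasure μ] [IsFiniteMeasure ν]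
    (P : ℕ → Prop) [DecidablePred P] :
    (μ.prod ν).real {p | p.2 < p.1 ∧ P p.1} =
      ∑' n, if P n then (∑ m ∈ Finset.range n, ν.real {m}) * μ.real {n} else 0 := by
  rw [measureReal_prod_eq_tsum _ _ .of_discrete]
  congr with n
  split_ifs with hn
  · rw [sum_measureReal_singleton, Finset.coe_range]
    simp [hn, Iio_def]
  · simp [hn]

lemma measure_prod_diagonal [MeasurableEq α] (μ ν : Measure α) [SFinite ν]
    [NullSingletonClass ν] : (μ.prod ν) (diagonal α) = 0 := by
  refine Measure.measure_prod_null_of_ae_null measurableSet_diagonal (.of_forall fun a ↦ ?_)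
  simp [preimage, diagonal]

end ProdMeasure

section LinearOrder

variable {α : Type*} [LinearOrder α] [TopologicalSpace α] [OrderClosedTopology α]

lemma frontier_snd_lt_fst_le_subset (a : α) :
    frontier {p : α × α | p.2 < p.1 ∧ p.1 ≤ a} ⊆ diagonal α ∪ Prod.fst ⁻¹' {a} := by
  refine (frontier_inter_subset {p : α × α | p.2 < p.1} {p | p.1 ≤ a}).trans ?_
  refine union_subset_union (inter_subset_left.trans fun p hp ↦ ?_)
    (inter_subset_right.trans (frontier_le_subset_eq continuous_fst continuous_const))
  exact (frontier_lt_subset_eq continuous_snd continuous_fst hp).symm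

variable [SecondCountableTopology α] [MeasurableSpace α] [OpensMeasurableSpace α]

lemma measurableSet_snd_lt_fst_le (a : α) :
    MeasurableSet {p : α × α | p.2 < p.1 ∧ p.1 ≤ a} :=
  (measurableSet_lt measurable_snd measurable_fst).inter
    (measurableSet_le measurable_fst measurable_const)

lemma measure_frontier_snd_lt_fst_le (μ ν : Measure α) [SFinite ν] [NullSingletonClass μ]
    [NullSingletonClass ν] (a : α) :
    (μ.prod ν) (frontier {p | p.2 < p.1 ∧ p.1 ≤ a}) = 0 := by
  refine measure_mono_null (frontier_snd_lt_fst_le_subset a)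
    (measure_union_null (measure_prod_diagonal μ ν) ?_)
  rw [← prod_univ, Measure.prod_prod, measure_singleton, zero_mul]

lemma measureReal_prod_self_snd_lt_fst_le (μ : Measure α) [IsFiniteMeasure μ]
    [NullSingletonClass μ] (a : α) :
    (μ.prod μ).real {p | p.2 < p.1 ∧ p.1 ≤ a} = μ.real (Iic a) ^ 2 / 2 := by
  set A : Set (α × α) := {p | p.2 < p.1 ∧ p.1 ≤ a}
  have hA : MeasurableSet A := measurableSet_snd_lt_fst_le a
  have hswap : (μ.prod μ).real (Prod.swap ⁻¹' A) = (μ.prod μ).real A := by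
    rw [← map_measureReal_apply measurable_swap hA, Measure.prod_swap]
  have hdisj : Disjoint A (Prod.swap ⁻¹' A) :=
    disjoint_left.2 fun p hp hp' ↦ lt_asymm hp.1 hp'.1
  have hquadrant : A ∪ Prod.swap ⁻¹' A = (Iic a ×ˢ Iic a) \ diagonal α := by
    ext ⟨x, y⟩
    simp only [A, mem_union, mem_preimage, Prod.swap_prod_mk, mem_ofPred_eq, Set.mem_sdiff,
      mem_prod, mem_Iic, mem_diagonal_iff]
    grind
  have hsum : 2 * (μ.prod μ).real A = μ.real (Iic a) ^ 2 := calc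
    2 * (μ.prod μ).real A = (μ.prod μ).real (A ∪ Prod.swap ⁻¹' A) := by
      rw [measureReal_union hdisj (measurable_swap hA), hswap, two_mul]
    _ = (μ.prod μ).real (Iic a ×ˢ Iic a) := by
      rw [hquadrant, measureReal_def, measure_sdiff_null (measure_prod_diagonal μ μ),
        ← measureReal_def]
    _ = μ.real (Iic a) ^ 2 := by rw [measureReal_prod_prod, sq]
  linarith

lemma tendsto_measureReal_prod_self_snd_lt_fst_le [TopologicalSpace.PseudoMetrizableSpace α]
    {ι : Type*} {l : Filter ι} {μs : ι → ProbabilityMeasure α} {μ : Measure α}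
    [IsProbabilityMeasure μ] [NullSingletonClass μ]
    (h : Tendsto μs l (𝓝 ⟨μ, inferInstance⟩)) (a : α) :
    Tendsto (fun i ↦ ((μs i : Measure α).prod (μs i)).real {p | p.2 < p.1 ∧ p.1 ≤ a}) l
      (𝓝 (μ.real (Iic a) ^ 2 / 2)) := by
  rw [← measureReal_prod_self_snd_lt_fst_le]
  have hprod := (ProbabilityMeasure.continuous_prod.tendsto (_, _)).comp (h.prodMk_nhds h)
  exact (ENNReal.tendsto_toReal (measure_ne_top _ _)).comp
    (ProbabilityMeasure.tendsto_measure_of_null_frontier_of_tendsto' hprod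
      (measure_frontier_snd_lt_fst_le μ μ a))

end LinearOrder

lemma measureReal_Iic_zero_of_isNegInvariant {G : Type*} [AddCommGroup G] [LinearOrder G]
    [IsOrderedAddMonoid G] [TopologicalSpace G] [OrderClosedTopology G] [MeasurableSpace G]
    [OpensMeasurableSpace G] [MeasurableNeg G] (μ : Measure G) [IsProbabilityMeasure μ]
    [NullSingletonClass μ] [μ.IsNegInvariant] : μ.real (Iic 0) = 1 / 2 := by
  have hsymm : μ.real (Ici 0) = μ.real (Iic 0) := by
    rw [measureReal_def, measureReal_def, ← μ.measure_neg (Iic 0), neg_Iic, neg_zero]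
  have hcompl := probReal_compl_eq_one_sub (μ := μ) (measurableSet_Iic (a := (0 : G)))
  rw [compl_Iic, measureReal_congr Ioi_ae_eq_Ici, hsymm] at hcompl
  linarith

instance isNegInvariant_gaussianReal_zero (v : ℝ≥0) : (gaussianReal 0 v).IsNegInvariant :=
  ⟨gaussianReal_map_neg.trans (by rw [neg_zero])⟩

/-- The law of `(N - r) / √r` for a Poisson variable `N` with mean `r`, the quantity to which the
central limit theorem applies; for `r = 0` it is the Dirac mass at `0`. -/
noncomputable def standardizedPoisson (r : ℝ≥0) : ProbabilityMeasure ℝ :=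
  ⟨(poissonMeasure r).map fun n : ℕ ↦ (√r)⁻¹ * ((n : ℝ) - r),
    Measure.isProbabilityMeasure_map .of_discrete⟩

-- In terms of `z = 1 / √r` the limit `r → ∞` becomes a second-order Taylor expansion at `z = 0`.
-- For `r = 0` both sides are `1`, by the convention `x / 0 = 0`.
lemma charFun_standardizedPoisson (r : ℝ≥0) (t : ℝ) :
    charFun (standardizedPoisson r : Measure ℝ) t =
      Complex.exp ((Complex.exp (t * Complex.I * ((√r)⁻¹ : ℝ)) - 1
        - t * Complex.I * ((√r)⁻¹ : ℝ)) / ((√r)⁻¹ : ℝ) ^ 2) := by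
  have hr : (((√r)⁻¹ : ℝ) : ℂ) ^ 2 = (r : ℂ)⁻¹ := by
    rw [← Complex.ofReal_pow, inv_pow, Real.sq_sqrt r.coe_nonneg, Complex.ofReal_inv]
  have hmap : (standardizedPoisson r : Measure ℝ) =
      (((poissonMeasure r).map (Nat.cast : ℕ → ℝ)).map (· + (-r : ℝ))).map ((√r)⁻¹ * ·) := by
    rw [Measure.map_map (by fun_prop) (by fun_prop), Measure.map_map (by fun_prop) (by fun_prop)]
    rfl
  rw [hmap, charFun_map_mul, charFun_map_add_const, charFun_map_cast_poissonMeasure,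
    ← Complex.exp_add, hr, div_inv_eq_mul, Real.inner_apply]
  congr 1
  push_cast
  ring_nf

lemma tendsto_exp_mul_sub_one_sub_div_sq (c : ℂ) :
    Tendsto (fun z : ℂ ↦ (Complex.exp (c * z) - 1 - c * z) / z ^ 2) (𝓝[≠] 0)
      (𝓝 (c ^ 2 / 2)) := by
  have hmul : Tendsto (fun z : ℂ ↦ c * z) (𝓝[≠] 0) (𝓝 0) :=
    ((continuous_const_mul c).tendsto' 0 0 (mul_zero c)).mono_left nhdsWithin_le_nhds
  have htaylor : (fun z : ℂ ↦ Complex.exp (c * z) - ∑ i ∈ Finset.range 3, (c * z) ^ i / i.factorial)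
      =o[𝓝[≠] 0] fun z ↦ z ^ 2 := by
    refine ((Complex.exp_sub_sum_range_succ_isLittleO_pow 2).comp_tendsto hmul).trans_isBigO ?_
    simpa only [Function.comp_def, mul_pow] using
      Asymptotics.isBigO_const_mul_self (c ^ 2) (fun z : ℂ ↦ z ^ 2) _
  have hlim := htaylor.tendsto_div_nhds_zero.add_const (c ^ 2 / 2)
  rw [zero_add] at hlim
  refine hlim.congr' ?_
  filter_upwards [self_mem_nhdsWithin] with z (hz : z ≠ 0)
  simp only [Finset.sum_range_succ, Finset.sum_range_zero, Nat.factorial]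
  field_simp
  push_cast
  ring

theorem tendsto_standardizedPoisson :
    Tendsto standardizedPoisson atTop (𝓝 ⟨gaussianReal 0 1, inferInstance⟩) := by
  have hscale : Tendsto (fun r : ℝ≥0 ↦ (((√r)⁻¹ : ℝ) : ℂ)) atTop (𝓝[≠] 0) := by
    have hinv : Tendsto (fun r : ℝ≥0 ↦ (√r)⁻¹) atTop (𝓝[>] 0) :=
      tendsto_inv_atTop_nhdsGT_zero.comp
        (Real.tendsto_sqrt_atTop.comp (NNReal.tendsto_coe_atTop.2 tendsto_id))
    exact (Complex.continuous_ofReal.continuousWithinAt.tendsto_nhdsWithin fun x hx ↦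
      Complex.ofReal_ne_zero.2 (ne_of_gt hx)).comp hinv
  refine tendsto_of_seq_tendsto fun u hu ↦ ?_
  refine ProbabilityMeasure.tendsto_iff_tendsto_charFun.2 fun t ↦ ?_
  have hexp := (Complex.continuous_exp.tendsto _).comp
    ((tendsto_exp_mul_sub_one_sub_div_sq (t * Complex.I)).comp (hscale.comp hu))
  rw [ProbabilityMeasure.coe_mk, charFun_gaussianReal]
  convert hexp using 2 with n
  · exact charFun_standardizedPoisson (u n) t
  · simp [mul_pow, neg_div]

lemma measureReal_standardizedPoisson_prod_self_snd_lt_fst_le_zero {r : ℝ≥0} (hr : 0 < r) :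
    ((standardizedPoisson r : Measure ℝ).prod (standardizedPoisson r)).real
        {p | p.2 < p.1 ∧ p.1 ≤ 0} =
      ∑' n : ℕ, if (n : ℝ) ≤ r then
        (∑ m ∈ Finset.range n, poissonPMF r m) * poissonPMF r n else 0 := by
  have hsqrt : 0 < √(r : ℝ) := Real.sqrt_pos.2 hr
  let Z (n : ℕ) : ℝ := (√r)⁻¹ * (n - r)
  have hpre : Prod.map Z Z ⁻¹' {p | p.2 < p.1 ∧ p.1 ≤ 0} = {p | p.2 < p.1 ∧ (p.1 : ℝ) ≤ r} := by
    ext ⟨n, m⟩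
    simp only [Z, mem_preimage, Prod.map_apply, mem_ofPred_eq, sub_lt_sub_iff_right, Nat.cast_lt,
      mul_lt_mul_iff_right₀ (inv_pos.2 hsqrt), inv_mul_le_iff₀ hsqrt, mul_zero, sub_nonpos]
  rw [standardizedPoisson, ProbabilityMeasure.coe_mk, Measure.map_prod_map _ _ .of_discrete
    .of_discrete, map_measureReal_apply .of_discrete (measurableSet_snd_lt_fst_le 0), hpre,
    measureReal_prod_nat_snd_lt_fst _ _ fun n : ℕ ↦ (n : ℝ) ≤ r]
  simp only [poissonMeasure_real_singleton, poissonPMF]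

/-- For independent Poisson(β) random variables `N, N'`,
`P(N' < N ≤ β) = Σ_{n ≤ β} Σ_{m < n} q_m q_n → 1/8` as `β → ∞`. -/
theorem tendsto_prob_lt_le_one_eighth :
    Filter.Tendsto
      (fun β : ℝ => ∑' n : ℕ,
        if (n : ℝ) ≤ β then
          (∑ m ∈ Finset.range n, poissonPMF β m) * poissonPMF β n
        else 0)
      Filter.atTop (nhds (1 / 8)) := by
  have := nullSingletonClass_gaussianReal (μ := 0) (v := 1) one_ne_zero
  have hlim := (tendsto_measureReal_prod_self_snd_lt_fst_le tendsto_standardizedPoisson 0).comp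
    tendsto_real_toNNReal_atTop
  rw [measureReal_Iic_zero_of_isNegInvariant,
    show ((1 / 2 : ℝ) ^ 2 / 2) = 1 / 8 by norm_num] at hlim
  refine hlim.congr' ?_
  filter_upwards [eventually_gt_atTop 0] with β hβ
  lift β to ℝ≥0 using hβ.le
  rw [Function.comp_apply, Real.toNNReal_coe]
  exact measureReal_standardizedPoisson_prod_self_snd_lt_fst_le_zero (by exact_mod_cast hβ)
end

section
/- Let (Ω, ℱ, P) be a probability space, let υ > 0 and b > 0 be real numbers, let n ≥ 1 be an integer with (n−1)υ < b, and let V₀ = 0 ≤ V₁ ≤ V₂ ≤ ⋯ ≤ V_{n−1} be random variables such that V_i − V_{i−1} ≤ υ almost surely for each i (hence V_i ≤ iυ almost surely). Then E[∏_{i=1}^{n−1} (1 − V_i/b)] ≥ exp(−(1/b) Σ_{i=1}^{n−1} E[V_i]) · exp(−Σ_{i=1}^{n−1} Σ_{j=2}^{∞} (iυ)^j / b^j). -/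
open MeasureTheory
open scoped ProbabilityTheory

/-! Almost surely `0 ≤ V i ≤ i υ < b`. Jensen's inequality for `exp`, applied to
`∑ i, log (1 - V i / b)`, bounds the expected product below by `exp (∑ i, E[log (1 - V i / b)])`.
Then `log (1 - x) ≥ 1 - (1 - x)⁻¹ = -x - ∑ j ≥ 2, x ^ j` for `x = V i / b`: the linear term is
integrated exactly, and in the higher ones `x` is replaced by its deterministic bound `i υ / b`. -/

lemma neg_tsum_pow_succ_le_log_one_sub {x : ℝ} (hx : |x| < 1) :
    -∑' j : ℕ, x ^ (j + 1) ≤ Real.log (1 - x) := by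
  have hgeom : (1 - x)⁻¹ = 1 + ∑' j : ℕ, x ^ (j + 1) := by
    rw [← tsum_geometric_of_abs_lt_one hx,
      (summable_geometric_of_abs_lt_one hx).tsum_eq_zero_add, pow_zero]
  have hlog := Real.one_sub_inv_le_log_of_pos (sub_pos.2 (abs_lt.1 hx).2)
  linarith

lemma neg_sub_tsum_pow_le_log_one_sub {x c : ℝ} (hx : 0 ≤ x) (hxc : x ≤ c) (hc : c < 1) :
    -x - ∑' j : ℕ, c ^ (j + 2) ≤ Real.log (1 - x) := by
  have hx1 : |x| < 1 := abs_lt.2 ⟨by linarith, by linarith⟩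
  have hsum : Summable fun j : ℕ => x ^ (j + 1) :=
    (summable_nat_add_iff 1).2 (summable_geometric_of_abs_lt_one hx1)
  have htail : ∑' j : ℕ, x ^ (j + 2) ≤ ∑' j : ℕ, c ^ (j + 2) :=
    ((summable_nat_add_iff 1).2 hsum).tsum_le_tsum (fun j => by gcongr)
      ((summable_nat_add_iff 2).2 (summable_geometric_of_lt_one (hx.trans hxc) hc))
  calc -x - ∑' j : ℕ, c ^ (j + 2) ≤ -x - ∑' j : ℕ, x ^ (j + 2) := by gcongr
    _ = -∑' j : ℕ, x ^ (j + 1) := by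
      rw [hsum.tsum_eq_zero_add, zero_add, pow_one, neg_add']
    _ ≤ Real.log (1 - x) := neg_tsum_pow_succ_le_log_one_sub hx1

lemma mem_Icc_add_nsmul_of_step {G : Type*} [AddCommGroup G] [PartialOrder G]
    [IsOrderedAddMonoid G] {a : ℕ → G} {d : G} (hmono : ∀ i, a i ≤ a (i + 1))
    (hstep : ∀ i, a (i + 1) - a i ≤ d) (i : ℕ) : a i ∈ Set.Icc (a 0) (a 0 + i • d) := by
  refine ⟨monotone_nat_of_le_succ hmono i.zero_le, ?_⟩
  rw [← sub_le_iff_le_add', ← Finset.sum_range_sub]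
  simpa using Finset.sum_le_card_nsmul (Finset.range i) _ d fun j _ => hstep j

section Measure

variable {Ω ι : Type*} [MeasurableSpace Ω] {μ : Measure Ω}

lemma ae_mem_Icc_natCast_mul_of_step {V : ℕ → Ω → ℝ} {d : ℝ} (hV0 : ∀ᵐ ω ∂μ, V 0 ω = 0)
    (hmono : ∀ i, ∀ᵐ ω ∂μ, V i ω ≤ V (i + 1) ω)
    (hstep : ∀ i, ∀ᵐ ω ∂μ, V (i + 1) ω - V i ω ≤ d) (i : ℕ) :
    ∀ᵐ ω ∂μ, V i ω ∈ Set.Icc 0 (i * d) := by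
  filter_upwards [hV0, ae_all_iff.2 hmono, ae_all_iff.2 hstep] with ω h0 hm hs
  simpa only [h0, zero_add, nsmul_eq_mul] using
    mem_Icc_add_nsmul_of_step (a := fun i => V i ω) hm hs i

lemma integrable_prod_one_sub [IsFiniteMeasure μ] {s : Finset ι} {X : ι → Ω → ℝ}
    (hmeas : ∀ i ∈ s, AEMeasurable (X i) μ) (hX : ∀ i ∈ s, ∀ᵐ ω ∂μ, X i ω ∈ Set.Icc 0 1) :
    Integrable (fun ω => ∏ i ∈ s, (1 - X i ω)) μ := by
  refine .of_mem_Icc 0 1 (s.aemeasurable_fun_prod fun i hi => (hmeas i hi).const_sub 1) ?_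
  filter_upwards [(ae_ball_iff s.countable_toSet).2 hX] with ω h
  exact ⟨Finset.prod_nonneg fun i hi => sub_nonneg.2 (h i hi).2,
    Finset.prod_le_one (fun i hi => sub_nonneg.2 (h i hi).2) fun i hi => sub_le_self 1 (h i hi).1⟩

lemma integrable_log_one_sub [IsFiniteMeasure μ] {X : Ω → ℝ} {a c : ℝ} (hmeas : AEMeasurable X μ)
    (hX : ∀ᵐ ω ∂μ, X ω ∈ Set.Icc a c) (hc : c < 1) :
    Integrable (fun ω => Real.log (1 - X ω)) μ := by
  refine .of_mem_Icc (Real.log (1 - c)) (Real.log (1 - a)) (hmeas.const_sub 1).log ?_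
  filter_upwards [hX] with ω ⟨haX, hXc⟩
  exact ⟨Real.log_le_log (sub_pos.2 hc) (sub_le_sub_left hXc 1),
    Real.log_le_log (sub_pos.2 (hXc.trans_lt hc)) (sub_le_sub_left haX 1)⟩

variable [IsProbabilityMeasure μ]

lemma exp_sum_integral_log_le_integral_prod {s : Finset ι} {Z : ι → Ω → ℝ}
    (hpos : ∀ i ∈ s, ∀ᵐ ω ∂μ, 0 < Z i ω)
    (hlog : ∀ i ∈ s, Integrable (fun ω => Real.log (Z i ω)) μ)
    (hprod : Integrable (fun ω => ∏ i ∈ s, Z i ω) μ) :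
    Real.exp (∑ i ∈ s, ∫ ω, Real.log (Z i ω) ∂μ) ≤ ∫ ω, ∏ i ∈ s, Z i ω ∂μ := by
  have hexp : (fun ω => Real.exp (∑ i ∈ s, Real.log (Z i ω))) =ᵐ[μ] fun ω => ∏ i ∈ s, Z i ω := by
    filter_upwards [(ae_ball_iff s.countable_toSet).2 hpos] with ω h
    rw [Real.exp_sum]
    exact Finset.prod_congr rfl fun i hi => Real.exp_log (h i hi)
  rw [← integral_finsetSum s hlog, ← integral_congr_ae hexp]
  exact convexOn_exp.map_integral_le Real.continuous_exp.continuousOn isClosed_univ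
    (ae_of_all μ fun _ => Set.mem_univ _) (integrable_finsetSum s hlog) (hprod.congr hexp.symm)

lemma neg_integral_sub_tsum_pow_le_integral_log_one_sub {X : Ω → ℝ} {c : ℝ}
    (hmeas : AEMeasurable X μ) (hX : ∀ᵐ ω ∂μ, X ω ∈ Set.Icc 0 c) (hc : c < 1) :
    -∫ ω, X ω ∂μ - ∑' j : ℕ, c ^ (j + 2) ≤ ∫ ω, Real.log (1 - X ω) ∂μ := by
  have hint : Integrable X μ := .of_mem_Icc 0 c hmeas hX
  calc -∫ ω, X ω ∂μ - ∑' j : ℕ, c ^ (j + 2) = ∫ ω, (-X ω - ∑' j : ℕ, c ^ (j + 2)) ∂μ := by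
        rw [integral_sub hint.fun_neg (integrable_const _), integral_neg, integral_const,
          probReal_univ, one_smul]
    _ ≤ ∫ ω, Real.log (1 - X ω) ∂μ := by
        refine integral_mono_ae (hint.neg.sub (integrable_const _))
          (integrable_log_one_sub hmeas hX hc) ?_
        filter_upwards [hX] with ω ⟨h0, hXc⟩
        exact neg_sub_tsum_pow_le_log_one_sub h0 hXc hc

theorem integral_prod_one_sub_div_ge_general {s : Finset ι} {V : ι → Ω → ℝ} {c : ι → ℝ} {b : ℝ}
    (hb : 0 < b) (hmeas : ∀ i ∈ s, AEMeasurable (V i) μ)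
    (hV : ∀ i ∈ s, ∀ᵐ ω ∂μ, V i ω ∈ Set.Icc 0 (c i)) (hc : ∀ i ∈ s, c i < b) :
    Real.exp (-(1 / b) * ∑ i ∈ s, ∫ ω, V i ω ∂μ) *
        Real.exp (-(∑ i ∈ s, ∑' j : ℕ, c i ^ (j + 2) / b ^ (j + 2))) ≤
      ∫ ω, ∏ i ∈ s, (1 - V i ω / b) ∂μ := by
  have hmeas' : ∀ i ∈ s, AEMeasurable (fun ω => V i ω / b) μ := fun i hi => (hmeas i hi).div_const b
  have hV' : ∀ i ∈ s, ∀ᵐ ω ∂μ, V i ω / b ∈ Set.Icc 0 (c i / b) := fun i hi =>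
    (hV i hi).mono fun ω h => ⟨div_nonneg h.1 hb.le, div_le_div_of_nonneg_right h.2 hb.le⟩
  have hc' : ∀ i ∈ s, c i / b < 1 := fun i hi => (div_lt_one hb).2 (hc i hi)
  have hexponent : -(1 / b) * ∑ i ∈ s, ∫ ω, V i ω ∂μ +
        -(∑ i ∈ s, ∑' j : ℕ, c i ^ (j + 2) / b ^ (j + 2)) =
      ∑ i ∈ s, (-∫ ω, V i ω / b ∂μ - ∑' j : ℕ, (c i / b) ^ (j + 2)) := by
    simp_rw [integral_div, div_pow, Finset.sum_sub_distrib, Finset.sum_neg_distrib,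
      ← Finset.sum_div]
    ring
  calc _ = Real.exp (∑ i ∈ s, (-∫ ω, V i ω / b ∂μ - ∑' j : ℕ, (c i / b) ^ (j + 2))) := by
        rw [← Real.exp_add, hexponent]
    _ ≤ Real.exp (∑ i ∈ s, ∫ ω, Real.log (1 - V i ω / b) ∂μ) := by
        gcongr with i hi
        exact neg_integral_sub_tsum_pow_le_integral_log_one_sub (hmeas' i hi) (hV' i hi) (hc' i hi)
    _ ≤ ∫ ω, ∏ i ∈ s, (1 - V i ω / b) ∂μ := exp_sum_integral_log_le_integral_prod
        (fun i hi => (hV' i hi).mono fun ω h => sub_pos.2 (h.2.trans_lt (hc' i hi)))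
        (fun i hi => integrable_log_one_sub (hmeas' i hi) (hV' i hi) (hc' i hi))
        (integrable_prod_one_sub hmeas' fun i hi =>
          (hV' i hi).mono fun ω h => ⟨h.1, h.2.trans (hc' i hi).le⟩)

end Measure

/-- Lemma 3: lower bound on `E[∏_{i=1}^{n−1} (1 − V_i/b)]` for a nondecreasing sequence
of random volumes `V_0 = 0 ≤ V_1 ≤ ⋯` with increments at most `υ` and `(n−1)υ < b`. -/
theorem integral_prod_one_sub_div_ge
    {Ω : Type*} [MeasureSpace Ω] [IsProbabilityMeasure (ℙ : Measure Ω)]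
    (υ b : ℝ) (hυ : 0 < υ) (hb : 0 < b)
    (n : ℕ) (hn : 1 ≤ n) (hnb : ((n : ℝ) - 1) * υ < b)
    (V : ℕ → Ω → ℝ) (hmeas : ∀ i, Measurable (V i))
    (hV0 : ∀ᵐ ω ∂(ℙ : Measure Ω), V 0 ω = 0)
    (hmono : ∀ i, ∀ᵐ ω ∂(ℙ : Measure Ω), V i ω ≤ V (i + 1) ω)
    (hstep : ∀ i, ∀ᵐ ω ∂(ℙ : Measure Ω), V (i + 1) ω - V i ω ≤ υ) :
    Real.exp (-(1 / b) * ∑ i ∈ Finset.Ico 1 n, ∫ ω, V i ω) *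
        Real.exp (-(∑ i ∈ Finset.Ico 1 n, ∑' j : ℕ, ((i : ℝ) * υ) ^ (j + 2) / b ^ (j + 2))) ≤
      ∫ ω, ∏ i ∈ Finset.Ico 1 n, (1 - V i ω / b) := by
  have hlt : ∀ i ∈ Finset.Ico 1 n, (i : ℝ) * υ < b := fun i hi =>
    (mul_le_mul_of_nonneg_right (le_sub_iff_add_le.2 (mod_cast (Finset.mem_Ico.1 hi).2))
      hυ.le).trans_lt hnb
  exact integral_prod_one_sub_div_ge_general hb (fun i _ => (hmeas i).aemeasurable)
    (fun i _ => ae_mem_Icc_natCast_mul_of_step hV0 hmono hstep i) hlt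
end

section
/- Let υ > 0, β > 0, δ ∈ ℝ, and let n ∈ ℕ satisfy n ≤ 2β and nυ ≤ β^δ/2. Then Σ_{i=1}^{n−1} Σ_{j=2}^{∞} (iυ)^j / β^{jδ} ≤ (16/3) υ² β^{3−2δ}. -/
/-!
With `x = υ / β ^ δ`, the inner sum is a geometric series of ratio `i x ≤ n x ≤ 1 / 2`, hence at
most twice its first term `(i x) ^ 2`. Summing over `i < n` and comparing with `∫₀ⁿ t ^ 2 dt` gives
at most `2 x ^ 2 n ^ 3 / 3`, and `n ≤ 2 β` turns this into `(16 / 3) x ^ 2 β ^ 3`.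
-/

theorem tsum_pow_add_of_norm_lt_one {K : Type*} [NormedDivisionRing K] {x : K} (hx : ‖x‖ < 1)
    (k : ℕ) : ∑' j : ℕ, x ^ (j + k) = (1 - x)⁻¹ * x ^ k := by
  simp_rw [pow_add]
  rw [tsum_mul_right, tsum_geometric_of_norm_lt_one hx]

theorem sum_Ico_pow_le (m n k : ℕ) :
    ∑ i ∈ Finset.Ico m n, (i : ℝ) ^ k ≤ (n : ℝ) ^ (k + 1) / (k + 1) := by
  rcases le_total n m with hnm | hmn
  · rw [Finset.Ico_eq_empty_of_le hnm, Finset.sum_empty]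
    positivity
  · have hmono : MonotoneOn (fun t : ℝ => t ^ k) (Set.Icc m n) := fun s hs t _ hst =>
      pow_le_pow_left₀ (m.cast_nonneg.trans hs.1) hst k
    calc ∑ i ∈ Finset.Ico m n, (i : ℝ) ^ k
        ≤ ∫ t in (m : ℝ)..n, t ^ k := hmono.sum_le_integral_Ico hmn
      _ = ((n : ℝ) ^ (k + 1) - (m : ℝ) ^ (k + 1)) / (k + 1) := integral_pow k
      _ ≤ (n : ℝ) ^ (k + 1) / (k + 1) := by
          gcongr
          exact sub_le_self _ (by positivity)

theorem sum_Ico_tsum_mul_pow_add_le {x : ℝ} (hx : 0 ≤ x) (m : ℕ) {n : ℕ} (hnx : n * x < 1)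
    (k : ℕ) :
    ∑ i ∈ Finset.Ico m n, ∑' j : ℕ, (i * x) ^ (j + k) ≤
      (1 - n * x)⁻¹ * (x ^ k * (n ^ (k + 1) / (k + 1))) := by
  have : 0 < 1 - n * x := sub_pos.mpr hnx
  calc ∑ i ∈ Finset.Ico m n, ∑' j : ℕ, (i * x) ^ (j + k)
      ≤ ∑ i ∈ Finset.Ico m n, (1 - n * x)⁻¹ * (x ^ k * i ^ k) := by
        refine Finset.sum_le_sum fun i hi => ?_
        have hix : i * x ≤ n * x := by
          gcongr
          exact (Finset.mem_Ico.mp hi).2.le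
        have hnorm : ‖i * x‖ < 1 := by
          rw [Real.norm_of_nonneg (by positivity)]
          exact hix.trans_lt hnx
        rw [tsum_pow_add_of_norm_lt_one hnorm, mul_pow, mul_comm ((i : ℝ) ^ k)]
        gcongr
    _ = (1 - n * x)⁻¹ * (x ^ k * ∑ i ∈ Finset.Ico m n, (i : ℝ) ^ k) := by
        simp_rw [Finset.mul_sum]
    _ ≤ (1 - n * x)⁻¹ * (x ^ k * (n ^ (k + 1) / (k + 1))) := by
        gcongr
        exact sum_Ico_pow_le m n k

theorem rpow_natCast_sub_natCast_mul {b : ℝ} (hb : 0 < b) (m k : ℕ) (s : ℝ) :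
    b ^ (m - k * s) = b ^ m / (b ^ s) ^ k := by
  rw [Real.rpow_sub hb, Real.rpow_natCast, mul_comm, Real.rpow_mul_natCast hb.le]

/-- Second assertion of Lemma 4 (Eq. (A.4)): for `n ≤ 2β` and `nυ ≤ β^δ/2`,
`Σ_{i=1}^{n−1} Σ_{j=2}^∞ (iυ)^j / β^{jδ} ≤ (16/3) υ² β^{3−2δ}`. -/
theorem tail_series_bound (υ β δ : ℝ) (hυ : 0 < υ) (hβ : 0 < β)
    (n : ℕ) (hn : (n : ℝ) ≤ 2 * β) (hnυ : (n : ℝ) * υ ≤ β ^ δ / 2) :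
    ∑ i ∈ Finset.Ico 1 n, ∑' j : ℕ, ((i : ℝ) * υ) ^ (j + 2) / (β ^ δ) ^ (j + 2) ≤
      (16 / 3) * υ ^ 2 * β ^ (3 - 2 * δ) := by
  have hratio : n * (υ / β ^ δ) ≤ 1 / 2 := by
    rw [← mul_div_assoc, div_le_iff₀ (by positivity)]
    linarith
  have hgap : (1 - n * (υ / β ^ δ))⁻¹ ≤ 2 := inv_le_of_inv_le₀ two_pos (by linarith)
  calc ∑ i ∈ Finset.Ico 1 n, ∑' j : ℕ, ((i : ℝ) * υ) ^ (j + 2) / (β ^ δ) ^ (j + 2)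
      = ∑ i ∈ Finset.Ico 1 n, ∑' j : ℕ, (i * (υ / β ^ δ)) ^ (j + 2) := by
        simp_rw [← div_pow, mul_div_assoc]
    _ ≤ (1 - n * (υ / β ^ δ))⁻¹ * ((υ / β ^ δ) ^ 2 * (n ^ 3 / 3)) := by
        refine (sum_Ico_tsum_mul_pow_add_le (by positivity) 1
          (hratio.trans_lt one_half_lt_one) 2).trans_eq ?_
        norm_num
    _ ≤ 2 * ((υ / β ^ δ) ^ 2 * ((2 * β) ^ 3 / 3)) := by gcongr
    _ = (16 / 3) * υ ^ 2 * (β ^ 3 / (β ^ δ) ^ 2) := by ring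
    _ = (16 / 3) * υ ^ 2 * β ^ (3 - 2 * δ) := by
        rw [← rpow_natCast_sub_natCast_mul hβ]
        norm_cast
end
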